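/- arXiv:2409.18831 — 2 statements merged into one kernel-verified Lean document; each statement's English description precedes it below -/
import Mathlib

section
/- Let δ > 0 and let x ∈ M satisfy ‖x‖ ≤ 1, ‖x − x*‖₂ ≤ δ, and ‖x − x²‖₂ ≤ δ. Then, setting z := x*x, one has ‖x − z‖₂ ≤ 2δ and ‖z² − z‖₂ ≤ 3δ. -/
open scoped ComplexOrder

/-- The tracial 2-norm `‖x‖₂ = (τ(x*x))^{1/2}` associated to a linear functional `τ`. -/
noncomputable def tnorm {M : Type*} [Ring M] [StarRing M] [Algebra ℂ M]
    (τ : M →ₗ[ℂ] ℂ) (x : M) : ℝ :=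
  Real.sqrt (τ (star x * x)).re

/-!
The 2-norm of a positive functional is the seminorm of its GNS space, on which `M` acts by left
multiplication with operator norm at most the C*-norm; traciality makes the adjoint isometric, and
so gives the same bound for right multiplication. With `z = x*x`, the two estimates come from
`x - z = (x - x²) + (x - x*) x` and `z² - z = -x* ((x - x²) + x (x - z))`.
-/

section StarAlgebra

variable {M : Type*} [Ring M] [StarRing M] [Algebra ℂ M] (τ : M →ₗ[ℂ] ℂ)

lemma tnorm_nonneg (a : M) : 0 ≤ tnorm τ a :=
  Real.sqrt_nonneg _

lemma tnorm_star (hτtr : ∀ x y : M, τ (x * y) = τ (y * x)) (a : M) :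
    tnorm τ (star a) = tnorm τ a := by
  rw [tnorm, tnorm, hτtr, star_star]

end StarAlgebra

section PositiveFunctional

variable {M : Type*} [CStarAlgebra M] [PartialOrder M] [StarOrderedRing M] (f : M →ₚ[ℂ] ℂ)

lemma tnorm_eq_norm_toPreGNS (a : M) : tnorm f.toLinearMap a = ‖f.toPreGNS a‖ :=
  rfl

lemma tnorm_add_le (a b : M) :
    tnorm f.toLinearMap (a + b) ≤ tnorm f.toLinearMap a + tnorm f.toLinearMap b := by
  simpa only [tnorm_eq_norm_toPreGNS, map_add] using norm_add_le (f.toPreGNS a) (f.toPreGNS b)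

lemma tnorm_mul_le_norm_mul_tnorm (c a : M) :
    tnorm f.toLinearMap (c * a) ≤ ‖c‖ * tnorm f.toLinearMap a :=
  (f.leftMulMapPreGNS c).le_of_opNorm_le
    (LinearMap.mkContinuous_norm_le _ (norm_nonneg c) _) (f.toPreGNS a)

lemma tnorm_star_mul_self_sq_sub_le (x : M) :
    tnorm f.toLinearMap ((star x * x) ^ 2 - star x * x) ≤
      ‖x‖ * (tnorm f.toLinearMap (x - x ^ 2) +
        ‖x‖ * tnorm f.toLinearMap (x - star x * x)) := by
  have decomposition : (star x * x) ^ 2 - star x * x =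
      -star x * ((x - x ^ 2) + x * (x - star x * x)) := by noncomm_ring
  rw [decomposition]
  grw [tnorm_mul_le_norm_mul_tnorm, tnorm_add_le, tnorm_mul_le_norm_mul_tnorm, norm_neg, norm_star]

variable (hf : ∀ x y : M, f (x * y) = f (y * x))
include hf

lemma tnorm_mul_le_tnorm_mul_norm (a c : M) :
    tnorm f.toLinearMap (a * c) ≤ tnorm f.toLinearMap a * ‖c‖ :=
  calc tnorm f.toLinearMap (a * c)
    _ = tnorm f.toLinearMap (star c * star a) := by rw [← star_mul, tnorm_star _ hf]
    _ ≤ ‖star c‖ * tnorm f.toLinearMap (star a) := tnorm_mul_le_norm_mul_tnorm f _ _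
    _ = tnorm f.toLinearMap a * ‖c‖ := by rw [norm_star, tnorm_star _ hf, mul_comm]

lemma tnorm_sub_star_mul_self_le (x : M) :
    tnorm f.toLinearMap (x - star x * x) ≤
      tnorm f.toLinearMap (x - x ^ 2) + tnorm f.toLinearMap (x - star x) * ‖x‖ := by
  have decomposition : x - star x * x = (x - x ^ 2) + (x - star x) * x := by noncomm_ring
  rw [decomposition]
  grw [tnorm_add_le, tnorm_mul_le_tnorm_mul_norm f hf]

end PositiveFunctional

theorem stmt1_general {M : Type*} [CStarAlgebra M]
    (τ : M →ₗ[ℂ] ℂ) (hτpos : ∀ x : M, 0 ≤ τ (star x * x))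
    (hτtr : ∀ x y : M, τ (x * y) = τ (y * x))
    {r δ ε : ℝ} {x : M} (hx : ‖x‖ ≤ r)
    (h1 : tnorm τ (x - star x) ≤ δ) (h2 : tnorm τ (x - x ^ 2) ≤ ε) :
    tnorm τ (x - star x * x) ≤ ε + δ * r ∧
      tnorm τ ((star x * x) ^ 2 - star x * x) ≤ r * (ε + r * (ε + δ * r)) := by
  let := CStarAlgebra.spectralOrder M
  let := CStarAlgebra.spectralOrderedRing M
  let f : M →ₚ[ℂ] ℂ := PositiveLinearMap.mk₀ τ fun a ha ↦ by
    obtain ⟨b, rfl⟩ := CStarAlgebra.nonneg_iff_eq_star_mul_self.1 ha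
    exact hτpos b
  have hr : 0 ≤ r := (norm_nonneg x).trans hx
  have hδ : 0 ≤ δ := (tnorm_nonneg τ _).trans h1
  have hε : 0 ≤ ε := (tnorm_nonneg τ _).trans h2
  have hz : tnorm τ (x - star x * x) ≤ ε + δ * r :=
    calc tnorm τ (x - star x * x)
      _ ≤ tnorm τ (x - x ^ 2) + tnorm τ (x - star x) * ‖x‖ := tnorm_sub_star_mul_self_le f hτtr x
      _ ≤ ε + δ * r := by gcongr
  refine ⟨hz, ?_⟩
  calc tnorm τ ((star x * x) ^ 2 - star x * x)
    _ ≤ ‖x‖ * (tnorm τ (x - x ^ 2) + ‖x‖ * tnorm τ (x - star x * x)) :=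
      tnorm_star_mul_self_sq_sub_le f x
    _ ≤ ‖x‖ * (ε + ‖x‖ * (ε + δ * r)) := by gcongr
    _ ≤ r * (ε + r * (ε + δ * r)) := by gcongr

theorem stmt1 {M : Type*} [CStarAlgebra M]
    (τ : M →ₗ[ℂ] ℂ) (hτ1 : τ 1 = 1)
    (hτpos : ∀ x : M, 0 ≤ τ (star x * x))
    (hτtr : ∀ x y : M, τ (x * y) = τ (y * x))
    (δ : ℝ) (hδ : 0 < δ) (x : M) (hx : ‖x‖ ≤ 1)
    (h1 : tnorm τ (x - star x) ≤ δ) (h2 : tnorm τ (x - x ^ 2) ≤ δ) :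
    tnorm τ (x - star x * x) ≤ 2 * δ ∧
      tnorm τ ((star x * x) ^ 2 - star x * x) ≤ 3 * δ := by
  obtain ⟨hz, hz_sq⟩ := stmt1_general τ hτpos hτtr hx h1 h2
  constructor <;> linarith
end

section
/- Let p, q ∈ M be projections and let x ∈ M satisfy ‖x‖ ≤ 1. Then, setting y := qxp, one has (y*y)p = y*y and ‖(y*y)² − y*y‖₂ ≤ ‖y*y − p‖₂. -/
/-!
Put `a = y*y`. Since `y p = y`, also `a p = a`, so `a² - a = a (a - p)`. The 2-norm is the seminorm
of the GNS space of `τ`, on which left multiplication by `a` has norm at most `‖a‖ = ‖y‖² ≤ 1`.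
-/

open scoped ComplexOrder

lemma norm_mul_mul_le_of_norm_le_one {R : Type*} [NonUnitalSeminormedRing R] {a b : R}
    (ha : ‖a‖ ≤ 1) (hb : ‖b‖ ≤ 1) (x : R) : ‖a * x * b‖ ≤ ‖x‖ := by
  grw [norm_mul₃_le, ha, hb, one_mul, mul_one]

section PositiveFunctional

variable {M : Type*} [CStarAlgebra M] (τ : M →ₗ[ℂ] ℂ)

lemma tnorm_mul_le (hτpos : ∀ x : M, 0 ≤ τ (star x * x)) (a b : M) :
    tnorm τ (a * b) ≤ ‖a‖ * tnorm τ b := by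
  let _ := CStarAlgebra.spectralOrder M
  have _ := CStarAlgebra.spectralOrderedRing M
  have nonneg_map (x : M) (hx : 0 ≤ x) : 0 ≤ τ x := by
    obtain ⟨c, rfl⟩ := CStarAlgebra.nonneg_iff_eq_star_mul_self.mp hx
    exact hτpos c
  let f : M →ₚ[ℂ] ℂ := .mk₀ τ nonneg_map
  have opNorm_le : ‖f.leftMulMapPreGNS a‖ ≤ ‖a‖ :=
    LinearMap.mkContinuous_norm_le _ (norm_nonneg a) _
  have tnorm_eq (x : M) : tnorm τ x = ‖f.toPreGNS x‖ := rfl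
  calc tnorm τ (a * b) = ‖f.leftMulMapPreGNS a (f.toPreGNS b)‖ := tnorm_eq (a * b)
    _ ≤ ‖a‖ * ‖f.toPreGNS b‖ := (f.leftMulMapPreGNS a).le_of_opNorm_le opNorm_le _
    _ = ‖a‖ * tnorm τ b := by rw [tnorm_eq]

lemma tnorm_sq_sub_self_le (hτpos : ∀ x : M, 0 ≤ τ (star x * x)) {a p : M}
    (hap : a * p = a) :
    tnorm τ (a ^ 2 - a) ≤ ‖a‖ * tnorm τ (a - p) := by
  have factor : a ^ 2 - a = a * (a - p) := by rw [mul_sub, hap, sq]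
  rw [factor]
  exact tnorm_mul_le τ hτpos a (a - p)

theorem stmt6_general (hτpos : ∀ x : M, 0 ≤ τ (star x * x)) {y p : M}
    (hyp : y * p = y) (hy : ‖y‖ ≤ 1) :
    star y * y * p = star y * y ∧
      tnorm τ ((star y * y) ^ 2 - star y * y) ≤ tnorm τ (star y * y - p) := by
  have hap : star y * y * p = star y * y := by rw [mul_assoc, hyp]
  have ha : ‖star y * y‖ ≤ 1 := by
    rw [CStarRing.norm_star_mul_self]
    exact mul_le_one₀ hy (norm_nonneg y) hy
  exact ⟨hap, (tnorm_sq_sub_self_le τ hτpos hap).trans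
    (mul_le_of_le_one_left (Real.sqrt_nonneg _) ha)⟩

end PositiveFunctional

theorem stmt6 {M : Type*} [CStarAlgebra M]
    (τ : M →ₗ[ℂ] ℂ) (hτ1 : τ 1 = 1)
    (hτpos : ∀ x : M, 0 ≤ τ (star x * x))
    (hτtr : ∀ x y : M, τ (x * y) = τ (y * x))
    (p q : M) (hp1 : star p = p) (hp2 : p * p = p) (hq1 : star q = q) (hq2 : q * q = q)
    (x : M) (hx : ‖x‖ ≤ 1) :
    (star (q * x * p) * (q * x * p)) * p = star (q * x * p) * (q * x * p) ∧
      tnorm τ ((star (q * x * p) * (q * x * p)) ^ 2 - star (q * x * p) * (q * x * p)) ≤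
        tnorm τ (star (q * x * p) * (q * x * p) - p) := by
  have hq : ‖q‖ ≤ 1 := IsStarProjection.norm_le q ⟨hq2, hq1⟩
  have hp : ‖p‖ ≤ 1 := IsStarProjection.norm_le p ⟨hp2, hp1⟩
  exact stmt6_general τ hτpos (by rw [mul_assoc, hp2])
    ((norm_mul_mul_le_of_norm_le_one hq hp x).trans hx)
end
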